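/- arXiv:1306.5742 — 4 statements merged into one kernel-verified Lean document; each statement's English description precedes it below -/
import Mathlib

section
/- (Extended first Frobenius–Stickelberger formula.) For every integer λ ≥ 1, every natural number n, and every triple (u, v, w) of C^n complex-valued functions on an interval J with u nowhere vanishing, one has Σ_{p=0}^{n} C(n,p) · (1/(p+λ)) · D^p(u^{p+λ} w) · D^{n-p}(u^{-p-λ} v) = Σ_{p=0}^{n} C(n,p) · (1/(p+λ)) · D^p(w) · D^{n-p}(v). -/
open scoped Nat BigOperators

open Finset PowerSeries Topology

/-!
Taylor expansion at `t` up to order `n` is multiplicative, so the formula is an identity between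
coefficients of power series built from the expansions `U`, `V`, `W`, where `U` is invertible.
Extracting the coefficients of `V` and `W` reduces it to `V = W = 1`, with `λ` shifted by the index
of the coefficient of `W`; there the right side vanishes in positive degree. So does the left side:
by the Leibniz rule, `n` times it is a sum of two terms in which the weights `1 / (p + λ)` cancel
against the exponents of `U`, and which differ only in sign and in whether the derivative of `U`
multiplies `U ^ (p + λ)` or `U ^ (-p - λ)`. Such a factor may be moved across, by induction on the
degree.
-/

section TwistedCoeff

variable {R : Type*} [CommSemiring R]

/-- The `n`-th coefficient of a product of power series, except that the two factors `A i`, `B i`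
may depend on the degree `i` at which the first one is evaluated. Both sides of the
Frobenius–Stickelberger formula are of this form. -/
noncomputable def twistedCoeff (A B : ℕ → R⟦X⟧) (n : ℕ) : R :=
  ∑ ij ∈ antidiagonal n, coeff ij.1 (A ij.1) * coeff ij.2 (B ij.1)

lemma twistedCoeff_congr {A A' B B' : ℕ → R⟦X⟧} {n : ℕ} (hA : ∀ i ≤ n, A i = A' i)
    (hB : ∀ i ≤ n, B i = B' i) : twistedCoeff A B n = twistedCoeff A' B' n :=
  sum_congr rfl fun ij hij => by
    have hle := HasAntidiagonal.antidiagonal.fst_le hij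
    rw [hA _ hle, hB _ hle]

lemma twistedCoeff_mul_left (H : R⟦X⟧) (A B : ℕ → R⟦X⟧) (n : ℕ) :
    twistedCoeff (fun i => H * A i) B n =
      ∑ km ∈ antidiagonal n, coeff km.1 H *
        twistedCoeff (fun i => A (km.1 + i)) (fun i => B (km.1 + i)) km.2 := by
  simp only [twistedCoeff, coeff_mul, sum_mul, mul_sum, sum_sigma']
  refine sum_nbij' (fun ⟨⟨_, j⟩, ⟨k, i⟩⟩ => ⟨(k, i + j), (i, j)⟩)
    (fun ⟨⟨k, _⟩, ⟨i, j⟩⟩ => ⟨(k + i, j), (k, i)⟩) ?_ ?_ ?_ ?_ ?_ <;>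
  · rintro ⟨⟨_, _⟩, ⟨_, _⟩⟩ h
    simp only [mem_sigma, HasAntidiagonal.mem_antidiagonal] at h ⊢
    obtain ⟨rfl, rfl⟩ := h
    simp only [add_assoc, mul_assoc, and_self]

lemma twistedCoeff_mul_right (H : R⟦X⟧) (A B : ℕ → R⟦X⟧) (n : ℕ) :
    twistedCoeff A (fun i => H * B i) n =
      ∑ km ∈ antidiagonal n, coeff km.1 H * twistedCoeff A B km.2 := by
  simp only [twistedCoeff, coeff_mul, mul_sum, sum_sigma']
  refine sum_nbij' (fun ⟨⟨i, _⟩, ⟨k, j⟩⟩ => ⟨(k, i + j), (i, j)⟩)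
    (fun ⟨⟨k, _⟩, ⟨i, j⟩⟩ => ⟨(i, k + j), (k, j)⟩) ?_ ?_ ?_ ?_ ?_ <;>
  · rintro ⟨⟨_, _⟩, ⟨_, _⟩⟩ h
    simp only [mem_sigma, HasAntidiagonal.mem_antidiagonal] at h ⊢
    obtain ⟨rfl, rfl⟩ := h
    simp only [add_left_comm, mul_left_comm, and_self]

lemma succ_mul_twistedCoeff_succ (A B : ℕ → R⟦X⟧) (n : ℕ) :
    (n + 1) * twistedCoeff A B (n + 1) =
      twistedCoeff (fun i => d⁄dX R (A (i + 1))) (fun i => B (i + 1)) n +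
        twistedCoeff A (fun i => d⁄dX R (B i)) n := by
  have hsplit : (n + 1) * twistedCoeff A B (n + 1) =
      ∑ ij ∈ antidiagonal (n + 1), coeff ij.1 (A ij.1) * ij.1 * coeff ij.2 (B ij.1) +
        ∑ ij ∈ antidiagonal (n + 1), coeff ij.1 (A ij.1) * (coeff ij.2 (B ij.1) * ij.2) := by
    rw [twistedCoeff, mul_sum, ← sum_add_distrib]
    refine sum_congr rfl fun ij hij => ?_
    have hcast : (n + 1 : R) = ij.1 + ij.2 := by
      rw [← Nat.cast_add, HasAntidiagonal.mem_antidiagonal.mp hij, Nat.cast_succ]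
    rw [hcast]
    ring
  rw [hsplit, Nat.sum_antidiagonal_succ, Nat.sum_antidiagonal_succ']
  simp [twistedCoeff, coeff_derivative]

lemma twistedCoeff_pow_move {U U' : R⟦X⟧} (hU : U * U' = 1) (H V W : R⟦X⟧) (n : ℕ) :
    twistedCoeff (fun i => H * (U ^ i * W)) (fun i => U' ^ i * V) n =
      twistedCoeff (fun i => U ^ i * W) (fun i => H * (U' ^ i * V)) n := by
  induction n using Nat.strong_induction_on generalizing H V W with
  | _ n ih =>
  rw [twistedCoeff_mul_left, twistedCoeff_mul_right]
  refine sum_congr rfl fun ⟨k, m⟩ hkm => congrArg _ ?_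
  rw [HasAntidiagonal.mem_antidiagonal] at hkm
  obtain rfl | hk := k.eq_zero_or_pos
  · simp
  -- The `k`-th coefficient of `H` leaves the assertion in degree `n - k`, with `U ^ k` for `H`.
  have hmove := ih m (by lia) (U ^ k) (U' ^ k * V) W
  have hcancel (i : ℕ) : U ^ k * (U' ^ i * (U' ^ k * V)) = U' ^ i * V := by
    rw [mul_left_comm, ← mul_assoc (U ^ k), ← mul_pow, hU, one_pow, one_mul]
  simp only [hcancel] at hmove
  simpa only [pow_add, mul_assoc, mul_left_comm] using hmove

lemma twistedCoeff_zpow_move (U : R⟦X⟧ˣ) (H : R⟦X⟧) (l m : ℤ) (n : ℕ) :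
    twistedCoeff (fun i => H * (U ^ (i + l)).val) (fun i => (U ^ (m - i)).val) n =
      twistedCoeff (fun i => (U ^ (i + l)).val) (fun i => H * (U ^ (m - i)).val) n := by
  have hleft (i : ℕ) : (U ^ (i + l)).val = U.val ^ i * (U ^ l).val := by
    rw [zpow_add, zpow_natCast, Units.val_mul, Units.val_pow_eq_pow_val]
  have hright (i : ℕ) : (U ^ (m - i)).val = U⁻¹.val ^ i * (U ^ m).val := by
    rw [zpow_sub, zpow_natCast, mul_comm, ← inv_pow, Units.val_mul, Units.val_pow_eq_pow_val]
  simp only [hleft, hright]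
  exact twistedCoeff_pow_move U.mul_inv H _ _ n

end TwistedCoeff

lemma derivative_units_zpow {R : Type*} [CommRing R] (U : R⟦X⟧ˣ) (z : ℤ) :
    d⁄dX R (U ^ z).val = (z : R) • (d⁄dX R U.val * (U ^ (z - 1)).val) := by
  rw [Int.cast_smul_eq_zsmul, zsmul_eq_mul]
  induction z with
  | zero => simp
  | succ k ih =>
    have hpow : (U ^ (k : ℤ)).val = (U ^ (k - 1 : ℤ)).val * U.val := by
      rw [← Units.val_mul, zpow_sub_one, inv_mul_cancel_right]
    rw [zpow_add_one, Units.val_mul, Derivation.leibniz, ih, add_sub_cancel_right, hpow]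
    simp only [smul_eq_mul]
    push_cast
    ring
  | pred k ih =>
    rw [zpow_sub_one U (-k - 1), zpow_sub_one, Units.val_mul, Derivation.leibniz, ih,
      derivative_inv, zpow_sub_one]
    simp only [smul_eq_mul, Units.val_mul]
    push_cast
    ring

section WeightedIdentity

variable {K : Type*} [Field K] [CharZero K]

-- The weights turn the two derivatives in the Leibniz rule into the two sides of
-- `twistedCoeff_zpow_move` for `H` the derivative of `U`, with opposite signs.
lemma twistedCoeff_inv_smul_zpow_succ (U : K⟦X⟧ˣ) (l : ℤ) (n : ℕ)
    (hl : ∀ i ≤ n + 1, (i + l : K) ≠ 0) :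
    twistedCoeff (fun i => (i + l : K)⁻¹ • (U ^ (i + l)).val)
      (fun i => (U ^ (-(i + l))).val) (n + 1) = 0 := by
  have hleft (i : ℕ) (hi : i ≤ n) :
      d⁄dX K (((i + 1 : ℕ) + l : K)⁻¹ • (U ^ ((i + 1 : ℕ) + l)).val) =
        d⁄dX K U.val * (U ^ (i + l)).val := by
    have hexp : ((i + 1 : ℕ) + l) - 1 = i + l := by push_cast; ring
    have hcast : (((i + 1 : ℕ) + l : ℤ) : K) = (i + 1 : ℕ) + l := by push_cast; ring
    rw [Derivation.map_smul, derivative_units_zpow, hexp, hcast,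
      inv_smul_smul₀ (hl (i + 1) (by lia))]
  have hexp (i : ℕ) : -((i + 1 : ℕ) + l) = (-l - 1) - i := by push_cast; ring
  have hright : twistedCoeff (fun i => (i + l : K)⁻¹ • (U ^ (i + l)).val)
      (fun i => d⁄dX K (U ^ (-(i + l))).val) n =
      -twistedCoeff (fun i => (U ^ (i + l)).val)
        (fun i => d⁄dX K U.val * (U ^ ((-l - 1) - i)).val) n := by
    rw [twistedCoeff, twistedCoeff, ← sum_neg_distrib]
    refine sum_congr rfl fun ij hij => ?_
    have hne := hl ij.1 ((HasAntidiagonal.antidiagonal.fst_le hij).trans n.le_succ)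
    have hexp' : -(ij.1 + l) - 1 = (-l - 1) - ij.1 := by ring
    simp only [derivative_units_zpow, hexp', coeff_smul, smul_eq_mul]
    push_cast
    field_simp
  have hsum := succ_mul_twistedCoeff_succ
    (fun i => (i + l : K)⁻¹ • (U ^ (i + l)).val) (fun i => (U ^ (-(i + l))).val) n
  rw [twistedCoeff_congr hleft fun i _ => by rw [hexp], twistedCoeff_zpow_move, hright,
    add_neg_cancel] at hsum
  exact (mul_eq_zero.mp hsum).resolve_left n.cast_add_one_ne_zero

lemma twistedCoeff_inv_smul_zpow_mul_right (U : K⟦X⟧ˣ) (V : K⟦X⟧) (l : ℤ) (n : ℕ)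
    (hl : ∀ i ≤ n, (i + l : K) ≠ 0) :
    twistedCoeff (fun i => (i + l : K)⁻¹ • (U ^ (i + l)).val)
      (fun i => V * (U ^ (-(i + l))).val) n = (l : K)⁻¹ * coeff n V := by
  rw [twistedCoeff_mul_right, sum_eq_single_of_mem (n, 0) (by simp)]
  · have hzero : twistedCoeff (fun i => (i + l : K)⁻¹ • (U ^ (i + l)).val)
        (fun i => (U ^ (-(i + l))).val) 0 = (l : K)⁻¹ := by
      have hne : constantCoeff (U ^ l).val ≠ 0 := ((U ^ l).isUnit.map constantCoeff).ne_zero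
      simp [twistedCoeff, mul_assoc, hne]
    rw [hzero, mul_comm]
  · rintro ⟨k, _ | m⟩ hkm hne
    · simp_all
    · rw [twistedCoeff_inv_smul_zpow_succ U l m, mul_zero]
      exact fun i hi => hl i (hi.trans (HasAntidiagonal.antidiagonal.snd_le hkm))

lemma sum_antidiagonal_coeff_zpow_mul_coeff_zpow_neg (U : K⟦X⟧ˣ) (V W : K⟦X⟧) (l : ℤ) (n : ℕ)
    (hl : ∀ i ≤ n, (i + l : K) ≠ 0) :
    ∑ ij ∈ antidiagonal n, (ij.1 + l : K)⁻¹ *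
        (coeff ij.1 ((U ^ (ij.1 + l)).val * W) * coeff ij.2 ((U ^ (-(ij.1 + l))).val * V)) =
      ∑ ij ∈ antidiagonal n, (ij.1 + l : K)⁻¹ * (coeff ij.1 W * coeff ij.2 V) := by
  calc
    _ = twistedCoeff (fun i => W * ((i + l : K)⁻¹ • (U ^ (i + l)).val))
          (fun i => V * (U ^ (-(i + l))).val) n :=
      sum_congr rfl fun ij _ => by
        simp only [mul_comm W, mul_comm V, smul_mul_assoc, coeff_smul, smul_eq_mul, mul_assoc]
    _ = _ := by
      rw [twistedCoeff_mul_left]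
      refine sum_congr rfl fun ⟨k, m⟩ hkm => ?_
      rw [HasAntidiagonal.mem_antidiagonal] at hkm
      have hcast (i : ℕ) : ((k + i : ℕ) + l : K) = i + (k + l : ℤ) := by push_cast; ring
      have hexp (i : ℕ) : ((k + i : ℕ) + l : ℤ) = i + (k + l) := by push_cast; ring
      simp only [hcast, hexp]
      rw [twistedCoeff_inv_smul_zpow_mul_right U V (k + l) m fun i hi => ?_]
      · push_cast
        ring
      · rw [← hcast]
        exact hl (k + i) (by lia)

end WeightedIdentity

section Taylor

variable {𝕜 F : Type*} [NontriviallyNormedField 𝕜] [NormedField F] [NormedAlgebra 𝕜 F]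
  {n : ℕ} {f g : 𝕜 → F} {A B : F⟦X⟧} {s : Set 𝕜} {t : 𝕜}

/-- `f` is `C^n` within `s` at `t`, and its Taylor series there is `A` up to order `n`; the
coefficients of `A` beyond the `n`-th are arbitrary. -/
structure HasTaylorSeriesWithinAt (n : ℕ) (f : 𝕜 → F) (A : F⟦X⟧) (s : Set 𝕜) (t : 𝕜) : Prop where
  contDiffWithinAt : ContDiffWithinAt 𝕜 n f s t
  iteratedDerivWithin_eq (p : ℕ) (hp : p ≤ n) : iteratedDerivWithin p f s t = p ! * coeff p A

namespace HasTaylorSeriesWithinAt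

lemma apply_eq (hf : HasTaylorSeriesWithinAt n f A s t) : f t = constantCoeff A := by
  simpa using hf.iteratedDerivWithin_eq 0 n.zero_le

lemma apply_ne_zero {U : F⟦X⟧ˣ} (hf : HasTaylorSeriesWithinAt n f U.val s t) : f t ≠ 0 :=
  hf.apply_eq ▸ (U.isUnit.map constantCoeff).ne_zero

lemma one : HasTaylorSeriesWithinAt n (1 : 𝕜 → F) 1 s t where
  contDiffWithinAt := contDiffWithinAt_const
  iteratedDerivWithin_eq p _ := by
    rw [Pi.one_def, iteratedDerivWithin_const, coeff_one]
    split_ifs with hp <;> simp [hp]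

lemma congr_series (hf : HasTaylorSeriesWithinAt n f A s t) (h : X ^ (n + 1) ∣ A - B) :
    HasTaylorSeriesWithinAt n f B s t where
  contDiffWithinAt := hf.contDiffWithinAt
  iteratedDerivWithin_eq p hp := by
    have hcoeff := X_pow_dvd_iff.mp h p (by lia)
    rw [map_sub, sub_eq_zero] at hcoeff
    rw [hf.iteratedDerivWithin_eq p hp, hcoeff]

lemma mul (hs : UniqueDiffOn 𝕜 s) (ht : t ∈ s) (hf : HasTaylorSeriesWithinAt n f A s t)
    (hg : HasTaylorSeriesWithinAt n g B s t) : HasTaylorSeriesWithinAt n (f * g) (A * B) s t where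
  contDiffWithinAt := hf.contDiffWithinAt.mul hg.contDiffWithinAt
  iteratedDerivWithin_eq p hp := by
    have hle : (p : WithTop ℕ∞) ≤ n := mod_cast hp
    rw [iteratedDerivWithin_mul ht hs (hf.contDiffWithinAt.of_le hle)
      (hg.contDiffWithinAt.of_le hle), coeff_mul,
      Nat.sum_antidiagonal_eq_sum_range_succ_mk, mul_sum]
    refine sum_congr rfl fun i hi => ?_
    have hip : i ≤ p := by simpa [Nat.lt_succ_iff] using hi
    rw [hf.iteratedDerivWithin_eq i (by lia), hg.iteratedDerivWithin_eq (p - i) (by lia),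
      ← Nat.choose_mul_factorial_mul_factorial hip]
    push_cast
    ring

lemma pow (hs : UniqueDiffOn 𝕜 s) (ht : t ∈ s) (hf : HasTaylorSeriesWithinAt n f A s t) (k : ℕ) :
    HasTaylorSeriesWithinAt n (f ^ k) (A ^ k) s t := by
  induction k with
  | zero => simpa using one
  | succ k ih => simpa only [pow_succ] using ih.mul hs ht hf

variable [CharZero F] {U : F⟦X⟧ˣ}

lemma exists_of_contDiffWithinAt (hf : ContDiffWithinAt 𝕜 n f s t) :
    ∃ A, HasTaylorSeriesWithinAt n f A s t :=
  ⟨.mk fun p => (p ! : F)⁻¹ * iteratedDerivWithin p f s t, hf, fun p _ => by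
    rw [coeff_mk, mul_inv_cancel_left₀ (Nat.cast_ne_zero.mpr p.factorial_ne_zero)]⟩

lemma X_pow_dvd_sub (hf : HasTaylorSeriesWithinAt n f A s t)
    (hg : HasTaylorSeriesWithinAt n g B s t) (ht : t ∈ s) (hfg : f =ᶠ[𝓝[s] t] g) :
    X ^ (n + 1) ∣ A - B := by
  refine X_pow_dvd_iff.mpr fun p hp => ?_
  have hderiv := hfg.iteratedDerivWithin_eq (hfg.self_of_nhdsWithin ht) (n := p)
  rw [hf.iteratedDerivWithin_eq p (by lia), hg.iteratedDerivWithin_eq p (by lia)] at hderiv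
  rw [map_sub, sub_eq_zero]
  exact mul_left_cancel₀ (Nat.cast_ne_zero.mpr p.factorial_ne_zero) hderiv

lemma inv (hs : UniqueDiffOn 𝕜 s) (ht : t ∈ s) (hf : HasTaylorSeriesWithinAt n f U.val s t) :
    HasTaylorSeriesWithinAt n f⁻¹ U⁻¹.val s t := by
  have hf0 := hf.apply_ne_zero
  obtain ⟨A, hA⟩ := exists_of_contDiffWithinAt (hf.contDiffWithinAt.inv hf0)
  have hone : f * f⁻¹ =ᶠ[𝓝[s] t] 1 :=
    (hf.contDiffWithinAt.continuousWithinAt.eventually_ne hf0).mono fun x hx => mul_inv_cancel₀ hx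
  have hdvd := (hf.mul hs ht hA).X_pow_dvd_sub one ht hone
  refine hA.congr_series ?_
  simpa only [mul_sub, Units.inv_mul_cancel_left, mul_one] using hdvd.mul_left U⁻¹.val

lemma zpow (hs : UniqueDiffOn 𝕜 s) (ht : t ∈ s) (hf : HasTaylorSeriesWithinAt n f U.val s t)
    (z : ℤ) : HasTaylorSeriesWithinAt n (f ^ z) (U ^ z).val s t := by
  cases z with
  | ofNat k => simpa using hf.pow hs ht k
  | negSucc k =>
    simpa only [zpow_negSucc, ← inv_pow, Units.val_pow_eq_pow_val] using
      (hf.inv hs ht).pow hs ht (k + 1)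

lemma exists_units_of_ne_zero (hf : ContDiffWithinAt 𝕜 n f s t) (hf0 : f t ≠ 0) :
    ∃ U : F⟦X⟧ˣ, HasTaylorSeriesWithinAt n f U.val s t := by
  obtain ⟨A, hA⟩ := exists_of_contDiffWithinAt hf
  have hunit : IsUnit A := isUnit_iff_constantCoeff.mpr (hA.apply_eq ▸ hf0.isUnit)
  exact ⟨hunit.unit, hA⟩

end HasTaylorSeriesWithinAt

lemma sum_choose_mul_iteratedDerivWithin {f g : ℕ → 𝕜 → F} {A B : ℕ → F⟦X⟧} (c : ℕ → F)
    (hf : ∀ p, HasTaylorSeriesWithinAt n (f p) (A p) s t)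
    (hg : ∀ p, HasTaylorSeriesWithinAt n (g p) (B p) s t) :
    ∑ p ∈ range (n + 1), (n.choose p : F) * c p * iteratedDerivWithin p (f p) s t *
        iteratedDerivWithin (n - p) (g p) s t =
      n ! * ∑ ij ∈ antidiagonal n, c ij.1 * (coeff ij.1 (A ij.1) * coeff ij.2 (B ij.1)) := by
  rw [Nat.sum_antidiagonal_eq_sum_range_succ_mk, mul_sum]
  refine sum_congr rfl fun p hp => ?_
  have hpn : p ≤ n := by simpa [Nat.lt_succ_iff] using hp
  rw [(hf p).iteratedDerivWithin_eq p hpn, (hg p).iteratedDerivWithin_eq (n - p) (n.sub_le p),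
    ← Nat.choose_mul_factorial_mul_factorial hpn]
  push_cast
  ring

end Taylor

theorem stmt2_general {𝕜 F : Type*} [NontriviallyNormedField 𝕜] [NormedField F]
    [NormedAlgebra 𝕜 F] [CharZero F] {J : Set 𝕜} (hJ : UniqueDiffOn 𝕜 J) {t : 𝕜} (ht : t ∈ J)
    (n : ℕ) (l : ℤ) (hl : ∀ p ≤ n, (p + l : ℤ) ≠ 0) {u v w : 𝕜 → F}
    (hu : ContDiffWithinAt 𝕜 n u J t) (hv : ContDiffWithinAt 𝕜 n v J t)
    (hw : ContDiffWithinAt 𝕜 n w J t) (hu0 : u t ≠ 0) :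
    ∑ p ∈ range (n + 1), (n.choose p : F) * (1 / ((p : F) + l)) *
        iteratedDerivWithin p (u ^ (p + l) * w) J t *
        iteratedDerivWithin (n - p) (u⁻¹ ^ (p + l) * v) J t =
      ∑ p ∈ range (n + 1), (n.choose p : F) * (1 / ((p : F) + l)) *
        iteratedDerivWithin p w J t * iteratedDerivWithin (n - p) v J t := by
  obtain ⟨U, hU⟩ := HasTaylorSeriesWithinAt.exists_units_of_ne_zero hu hu0
  obtain ⟨V, hV⟩ := HasTaylorSeriesWithinAt.exists_of_contDiffWithinAt hv
  obtain ⟨W, hW⟩ := HasTaylorSeriesWithinAt.exists_of_contDiffWithinAt hw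
  have hUW (p : ℕ) := (hU.zpow hJ ht (p + l)).mul hJ ht hW
  have hUV (p : ℕ) := (hU.zpow hJ ht (-(p + l))).mul hJ ht hV
  simp only [one_div, inv_zpow']
  rw [sum_choose_mul_iteratedDerivWithin _ hUW hUV,
    sum_choose_mul_iteratedDerivWithin _ (fun _ => hW) (fun _ => hV),
    sum_antidiagonal_coeff_zpow_mul_coeff_zpow_neg U V W l n fun p hp => mod_cast hl p hp]

theorem stmt2 (J : Set ℝ) (hJconn : J.OrdConnected) (hJuniq : UniqueDiffOn ℝ J)
    (n : ℕ) (l : ℕ) (hl : 1 ≤ l) (u v w : ℝ → ℂ)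
    (hu : ContDiffOn ℝ n u J) (hv : ContDiffOn ℝ n v J) (hw : ContDiffOn ℝ n w J)
    (hu0 : ∀ t ∈ J, u t ≠ 0) :
    ∀ t ∈ J,
      (∑ p ∈ Finset.range (n + 1), (n.choose p : ℂ) * (1 / ((p : ℂ) + l)) *
        iteratedDerivWithin p (u ^ (p + l) * w) J t *
        iteratedDerivWithin (n - p) (u⁻¹ ^ (p + l) * v) J t) =
      ∑ p ∈ Finset.range (n + 1), (n.choose p : ℂ) * (1 / ((p : ℂ) + l)) *
        iteratedDerivWithin p w J t *
        iteratedDerivWithin (n - p) v J t := by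
  intro t ht
  simpa only [Int.cast_natCast, ← Nat.cast_add (R := ℤ), zpow_natCast] using
    stmt2_general hJuniq ht n l (fun p _ => by lia) (hu t ht) (hv t ht) (hw t ht) (hu0 t ht)
end

section
/- (Dual extended Frobenius–Stickelberger formula.) For every integer λ ≥ 1, every natural number n, and every triple (u, v, w) of C^n complex-valued functions on an interval J with u nowhere vanishing, one has Σ_{p=0}^{n} C(n,p) · ((-1)^p/(p+λ)) · u^{p+λ} · D^p(v · D^{n-p}(u^{-p-λ} w)) = Σ_{p=0}^{n} C(n,p) · ((-1)^p/(p+λ)) · D^p(v · D^{n-p} w). -/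
open scoped Nat BigOperators

/-!
Put `h = u' / u`. Since `u ^ q * D (u ^ (-q) * f) = f' - q * h * f`, the function
`u ^ q * D ^ m (u ^ (-q) * w)` is at each point a polynomial in `q`, of degree at most `m`, with
value `D ^ m w` at `q = 0`. After expanding `D ^ p (v * ·)` by the Leibniz rule, the coefficients of
`D ^ k v` on the two sides differ by
`∑ p, (-1) ^ p * C(n, p) * C(p, k) * (P (p + l) - P 0) / (p + l)` for such a polynomial `P` of
degree at most `n - k`. As `C(n, p) * C(p, k) = C(n, k) * C(n - k, p - k)` and `(P X - P 0) / X` is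
zero or a polynomial of degree less than `n - k`, this is a multiple of the `(n - k)`-th finite
difference of a polynomial of smaller degree, hence zero.
-/

section BinomialSums

open Polynomial

theorem sum_neg_one_pow_mul_choose_mul_eval_add_eq_zero {R : Type*} [CommRing R] {P : R[X]} {n : ℕ}
    (hP : P.natDegree < n) (c : R) :
    ∑ p ∈ Finset.range (n + 1), (-1) ^ p * (n.choose p : R) * P.eval (p + c) = 0 := by
  have hdiff := congrFun (fwdDiff_iter_eq_zero_of_degree_lt hP) c
  rw [fwdDiff_iter_eq_sum_shift] at hdiff
  calc
    _ = ∑ p ∈ Finset.range (n + 1),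
        (-1) ^ n * (((-1 : ℤ) ^ (n - p) * n.choose p) • P.eval (c + p • 1)) := by
      refine Finset.sum_congr rfl fun p hp => ?_
      obtain ⟨j, rfl⟩ := Nat.exists_eq_add_of_le (Finset.mem_range_succ_iff.1 hp)
      have hsign : (-1 : R) ^ j * (-1) ^ j = 1 := by rw [← mul_pow]; simp
      simp only [zsmul_eq_mul, nsmul_eq_mul, mul_one, Nat.add_sub_cancel_left, pow_add, add_comm c]
      push_cast
      linear_combination -((-1) ^ p * ((p + j).choose p : R) * P.eval (p + c)) * hsign
    _ = 0 := by rw [← Finset.mul_sum, hdiff, Pi.zero_apply, mul_zero]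

theorem sum_choose_mul_neg_one_pow_div_mul_eval {K : Type*} [Field K] {P : K[X]} {n : ℕ}
    (hP : P.natDegree ≤ n) {c : K} (hc : ∀ p ≤ n, (p : K) + c ≠ 0) :
    ∑ p ∈ Finset.range (n + 1), (n.choose p : K) * ((-1) ^ p / (p + c) * P.eval (p + c)) =
      ∑ p ∈ Finset.range (n + 1), (n.choose p : K) * ((-1) ^ p / (p + c) * P.eval 0) := by
  cases n with
  | zero =>
    rw [eq_C_of_natDegree_le_zero hP]
    simp only [eval_C]
  | succ n =>
    have hdivX : P.divX.natDegree < n + 1 := by rw [natDegree_divX_eq_natDegree_tsub_one]; lia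
    have heval (x : K) : P.eval x = x * P.divX.eval x + P.eval 0 := by
      conv_lhs => rw [← P.divX_mul_X_add]
      simp [coeff_zero_eq_eval_zero, mul_comm]
    rw [← sub_eq_zero, ← Finset.sum_sub_distrib]
    refine (Finset.sum_congr rfl fun p hp => ?_).trans
      (sum_neg_one_pow_mul_choose_mul_eval_add_eq_zero hdivX c)
    have hpc := hc p (Finset.mem_range_succ_iff.1 hp)
    rw [heval (p + c)]
    field_simp
    ring

theorem sum_choose_mul_choose_mul {R : Type*} [CommSemiring R] (k m : ℕ) (f : ℕ → R) :
    ∑ p ∈ Finset.range (k + m + 1), ((k + m).choose p : R) * ((p.choose k : R) * f p) =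
      (k + m).choose k * ∑ j ∈ Finset.range (m + 1), (m.choose j : R) * f (k + j) := by
  have hlow : ∑ p ∈ Finset.range k, ((k + m).choose p : R) * ((p.choose k : R) * f p) = 0 :=
    Finset.sum_eq_zero fun p hp => by simp [Nat.choose_eq_zero_of_lt (Finset.mem_range.1 hp)]
  rw [add_assoc, Finset.sum_range_add, hlow, zero_add, Finset.mul_sum]
  refine Finset.sum_congr rfl fun j _ => ?_
  have hchoose : (k + m).choose (k + j) * (k + j).choose k = (k + m).choose k * m.choose j := by
    rw [Nat.choose_mul (Nat.le_add_right k j), Nat.add_sub_cancel_left, Nat.add_sub_cancel_left]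
  rw [← mul_assoc, ← mul_assoc, ← Nat.cast_mul, hchoose, Nat.cast_mul]

theorem sum_choose_mul_choose_mul_neg_one_pow_div_mul_eval {K : Type*} [Field K] {P : K[X]}
    {n k : ℕ} (hk : k ≤ n) (hP : P.natDegree ≤ n - k) {c : K} (hc : ∀ p ≤ n, (p : K) + c ≠ 0) :
    ∑ p ∈ Finset.range (n + 1),
        (n.choose p : K) * ((p.choose k : K) * ((-1) ^ p / (p + c) * P.eval (p + c))) =
      ∑ p ∈ Finset.range (n + 1),
        (n.choose p : K) * ((p.choose k : K) * ((-1) ^ p / (p + c) * P.eval 0)) := by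
  obtain ⟨m, rfl⟩ := Nat.exists_eq_add_of_le hk
  rw [Nat.add_sub_cancel_left] at hP
  have hc' : ∀ j ≤ m, (j : K) + (k + c) ≠ 0 := fun j hj => by
    simpa [add_assoc, add_left_comm] using hc (k + j) (by lia)
  have hshift := sum_choose_mul_neg_one_pow_div_mul_eval hP hc'
  have hcast (j : ℕ) : ((k + j : ℕ) : K) + c = j + (k + c) := by push_cast; ring
  rw [sum_choose_mul_choose_mul, sum_choose_mul_choose_mul]
  simp only [hcast, pow_add, mul_div_assoc, mul_assoc, mul_left_comm _ ((-1 : K) ^ k),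
    ← Finset.mul_sum] at hshift ⊢
  rw [hshift]

end BinomialSums

section IteratedDerivWithin

variable {𝕜 F : Type*} [NontriviallyNormedField 𝕜] [NormedAddCommGroup F] [NormedSpace 𝕜 F]
  {s : Set 𝕜}

theorem iteratedDerivWithin_iteratedDerivWithin (i m : ℕ) (f : 𝕜 → F) :
    iteratedDerivWithin i (iteratedDerivWithin m f s) s = iteratedDerivWithin (i + m) f s := by
  have hiter (j : ℕ) (g : 𝕜 → F) : iteratedDerivWithin j g s = (derivWithin · s)^[j] g :=
    funext fun _ => iteratedDerivWithin_eq_iterate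
  simp only [hiter, Function.iterate_add_apply]

theorem contDiffOn_iteratedDerivWithin (hs : UniqueDiffOn 𝕜 s) {f : 𝕜 → F} {p m : ℕ}
    (hf : ContDiffOn 𝕜 (p + m : ℕ) f s) : ContDiffOn 𝕜 p (iteratedDerivWithin m f s) s := by
  induction m generalizing f with
  | zero => simpa using hf
  | succ m ih =>
    rw [iteratedDerivWithin_succ']
    exact ih (hf.derivWithin hs (by norm_cast))

variable {A : Type*} [NormedCommRing A] [NormedAlgebra 𝕜 A]

-- The summands with `p < k` vanish: the range is independent of `p` so that sums over `p` and `k`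
-- can be exchanged.
theorem iteratedDerivWithin_mul_iteratedDerivWithin (hs : UniqueDiffOn 𝕜 s) {v g : 𝕜 → A} {n p : ℕ}
    (hv : ContDiffOn 𝕜 n v s) (hg : ContDiffOn 𝕜 n g s) (hp : p ≤ n) {t : 𝕜} (ht : t ∈ s) :
    iteratedDerivWithin p (v * iteratedDerivWithin (n - p) g s) s t =
      ∑ k ∈ Finset.range (n + 1), (p.choose k : A) * iteratedDerivWithin k v s t *
        iteratedDerivWithin (n - k) g s t := by
  have hg' : ContDiffOn 𝕜 p (iteratedDerivWithin (n - p) g s) s :=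
    contDiffOn_iteratedDerivWithin hs (by rwa [Nat.add_sub_cancel' hp])
  rw [iteratedDerivWithin_mul ht hs ((hv.of_le (by exact_mod_cast hp)) t ht) (hg' t ht)]
  refine (Finset.sum_congr rfl fun k hk => ?_).trans
    (Finset.sum_subset (Finset.range_subset_range.2 (Nat.succ_le_succ hp)) fun k _ hk => ?_)
  · have hkp : k ≤ p := Finset.mem_range_succ_iff.1 hk
    rw [iteratedDerivWithin_iteratedDerivWithin, show p - k + (n - p) = n - k by lia]
  · rw [Nat.choose_eq_zero_of_lt (by simpa using hk), Nat.cast_zero, zero_mul, zero_mul]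

theorem sum_mul_iteratedDerivWithin_mul_iteratedDerivWithin (hs : UniqueDiffOn 𝕜 s) {n : ℕ}
    {v : 𝕜 → A} {g : ℕ → 𝕜 → A} (hv : ContDiffOn 𝕜 n v s) (hg : ∀ p, ContDiffOn 𝕜 n (g p) s)
    (c : ℕ → A) {t : 𝕜} (ht : t ∈ s) :
    ∑ p ∈ Finset.range (n + 1),
        c p * iteratedDerivWithin p (v * iteratedDerivWithin (n - p) (g p) s) s t =
      ∑ k ∈ Finset.range (n + 1), iteratedDerivWithin k v s t *
        ∑ p ∈ Finset.range (n + 1), c p * (p.choose k * iteratedDerivWithin (n - k) (g p) s t) := by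
  simp only [Finset.mul_sum]
  rw [Finset.sum_comm]
  refine Finset.sum_congr rfl fun p hp => ?_
  rw [iteratedDerivWithin_mul_iteratedDerivWithin hs hv (hg p) (Finset.mem_range_succ_iff.1 hp) ht,
    Finset.mul_sum]
  exact Finset.sum_congr rfl fun k _ => by ring

end IteratedDerivWithin

section Conjugation

variable {𝕜 : Type*} [NontriviallyNormedField 𝕜]

theorem contDiffOn_zpow {E K : Type*} [NormedAddCommGroup E] [NormedSpace 𝕜 E] [NormedField K]
    [NormedAlgebra 𝕜 K] {n : WithTop ℕ∞} {u : E → K} {s : Set E} (hu : ContDiffOn 𝕜 n u s)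
    (hu0 : ∀ t ∈ s, u t ≠ 0) (q : ℤ) : ContDiffOn 𝕜 n (u ^ q) s := by
  cases q with
  | ofNat q => exact (hu.pow q).congr fun t _ => by simp
  | negSucc q =>
    exact ((hu.pow (q + 1)).inv fun t ht => pow_ne_zero _ (hu0 t ht)).congr fun t _ => by
      simp [zpow_negSucc]

variable {K : Type*} [NontriviallyNormedField K] [NormedAlgebra 𝕜 K] {s : Set 𝕜} {u w : 𝕜 → K}

theorem contDiffOn_derivWithin_mul_inv_mul (hs : UniqueDiffOn 𝕜 s) {m : ℕ}
    (hu : ContDiffOn 𝕜 (m + 1 : ℕ) u s) (hw : ContDiffOn 𝕜 m w s) (hu0 : ∀ t ∈ s, u t ≠ 0) :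
    ContDiffOn 𝕜 m (derivWithin u s * u⁻¹ * w) s :=
  ((hu.derivWithin hs (by norm_cast)).mul
    ((hu.of_le (by exact_mod_cast m.le_succ)).inv hu0)).mul hw

theorem derivWithin_zpow_neg_mul {t : 𝕜} (hs : UniqueDiffWithinAt 𝕜 s t)
    (hu : DifferentiableWithinAt 𝕜 u s t) (hw : DifferentiableWithinAt 𝕜 w s t) (hu0 : u t ≠ 0)
    (q : ℤ) :
    derivWithin (u ^ (-q) * w) s t =
      (u ^ (-q) * derivWithin w s - (q : K) • (u ^ (-q) * (derivWithin u s * u⁻¹ * w))) t := by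
  have hpow : HasDerivWithinAt (u ^ (-q)) ((-q : ℤ) * u t ^ (-q - 1) * derivWithin u s t) s t :=
    (hasDerivAt_zpow (-q) (u t) (Or.inl hu0)).comp_hasDerivWithinAt t hu.hasDerivWithinAt
  rw [(hpow.mul hw.hasDerivWithinAt).derivWithin hs, zpow_sub_one₀ hu0]
  simp only [Pi.sub_apply, Pi.mul_apply, Pi.smul_apply, Pi.pow_apply, Pi.inv_apply, smul_eq_mul]
  push_cast
  ring

theorem iteratedDerivWithin_succ_zpow_neg_mul (hs : UniqueDiffOn 𝕜 s) {m : ℕ}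
    (hu : ContDiffOn 𝕜 (m + 1 : ℕ) u s) (hw : ContDiffOn 𝕜 (m + 1 : ℕ) w s)
    (hu0 : ∀ t ∈ s, u t ≠ 0) (q : ℤ) {t : 𝕜} (ht : t ∈ s) :
    iteratedDerivWithin (m + 1) (u ^ (-q) * w) s t =
      iteratedDerivWithin m (u ^ (-q) * derivWithin w s) s t -
        q * iteratedDerivWithin m (u ^ (-q) * (derivWithin u s * u⁻¹ * w)) s t := by
  have hle : (m : WithTop ℕ∞) ≤ (m + 1 : ℕ) := by exact_mod_cast m.le_succ
  have hpow : ContDiffOn 𝕜 m (u ^ (-q)) s := contDiffOn_zpow (hu.of_le hle) hu0 (-q)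
  have hpow_deriv : ContDiffOn 𝕜 m (u ^ (-q) * derivWithin w s) s :=
    hpow.mul (hw.derivWithin hs (by norm_cast))
  have hpow_log : ContDiffOn 𝕜 m ((q : K) • (u ^ (-q) * (derivWithin u s * u⁻¹ * w))) s :=
    (hpow.mul (contDiffOn_derivWithin_mul_inv_mul hs hu (hw.of_le hle) hu0)).const_smul (q : K)
  have hderiv : Set.EqOn (derivWithin (u ^ (-q) * w) s)
      (u ^ (-q) * derivWithin w s - (q : K) • (u ^ (-q) * (derivWithin u s * u⁻¹ * w))) s :=
    fun x hx => derivWithin_zpow_neg_mul (hs x hx) (hu.differentiableOn (by norm_cast) x hx)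
      (hw.differentiableOn (by norm_cast) x hx) (hu0 x hx) q
  rw [iteratedDerivWithin_succ', iteratedDerivWithin_congr hderiv ht,
    iteratedDerivWithin_sub ht hs (hpow_deriv t ht) (hpow_log t ht),
    iteratedDerivWithin_const_smul_field, smul_eq_mul]

theorem exists_polynomial_zpow_mul_iteratedDerivWithin_zpow_neg_mul (hs : UniqueDiffOn 𝕜 s) {m : ℕ}
    (hu : ContDiffOn 𝕜 m u s) (hw : ContDiffOn 𝕜 m w s) (hu0 : ∀ t ∈ s, u t ≠ 0) {t : 𝕜}
    (ht : t ∈ s) :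
    ∃ P : Polynomial K, P.natDegree ≤ m ∧
      ∀ q : ℤ, (u ^ q) t * iteratedDerivWithin m (u ^ (-q) * w) s t = P.eval (q : K) := by
  induction m generalizing w with
  | zero =>
    refine ⟨Polynomial.C (w t), Polynomial.natDegree_C _ |>.le, fun q => ?_⟩
    simp [mul_inv_cancel_left₀ (zpow_ne_zero q (hu0 t ht))]
  | succ m ih =>
    have hle : (m : WithTop ℕ∞) ≤ (m + 1 : ℕ) := by exact_mod_cast m.le_succ
    have hw' : ContDiffOn 𝕜 m (derivWithin w s) s := hw.derivWithin hs (by norm_cast)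
    obtain ⟨P, hPdeg, hP⟩ := ih (hu.of_le hle) hw'
    obtain ⟨Q, hQdeg, hQ⟩ :=
      ih (hu.of_le hle) (contDiffOn_derivWithin_mul_inv_mul hs hu (hw.of_le hle) hu0)
    refine ⟨P - Polynomial.X * Q, ?_, fun q => ?_⟩
    · have hXQdeg : (Polynomial.X * Q).natDegree ≤ 1 + m :=
        Polynomial.natDegree_mul_le_of_le Polynomial.natDegree_X_le hQdeg
      exact (Polynomial.natDegree_sub_le_of_le hPdeg hXQdeg).trans (by lia)
    · rw [iteratedDerivWithin_succ_zpow_neg_mul hs hu hw hu0 q ht, Polynomial.eval_sub,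
        Polynomial.eval_mul, Polynomial.eval_X, ← hP, ← hQ]
      ring

end Conjugation

theorem stmt4_general {𝕜 K : Type*} [NontriviallyNormedField 𝕜] [NontriviallyNormedField K]
    [NormedAlgebra 𝕜 K] {s : Set 𝕜} (hs : UniqueDiffOn 𝕜 s) {n : ℕ} {l : ℤ}
    (hl : ∀ p ≤ n, (p : K) + l ≠ 0) {u v w : 𝕜 → K} (hu : ContDiffOn 𝕜 n u s)
    (hv : ContDiffOn 𝕜 n v s) (hw : ContDiffOn 𝕜 n w s) (hu0 : ∀ t ∈ s, u t ≠ 0) {t : 𝕜}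
    (ht : t ∈ s) :
    (∑ p ∈ Finset.range (n + 1), (n.choose p : K) * ((-1) ^ p / ((p : K) + l)) *
      (u ^ (p + l)) t *
      iteratedDerivWithin p (v * iteratedDerivWithin (n - p) (u ^ (-(p + l)) * w) s) s t) =
    ∑ p ∈ Finset.range (n + 1), (n.choose p : K) * ((-1) ^ p / ((p : K) + l)) *
      iteratedDerivWithin p (v * iteratedDerivWithin (n - p) w s) s t := by
  have hconj (p : ℕ) : ContDiffOn 𝕜 n (u ^ (-(p + l)) * w) s := (contDiffOn_zpow hu hu0 _).mul hw
  rw [sum_mul_iteratedDerivWithin_mul_iteratedDerivWithin hs hv hconj _ ht,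
    sum_mul_iteratedDerivWithin_mul_iteratedDerivWithin hs hv (fun _ => hw) _ ht]
  refine Finset.sum_congr rfl fun k hk => congrArg _ ?_
  have hle : ((n - k : ℕ) : WithTop ℕ∞) ≤ n := by exact_mod_cast n.sub_le k
  obtain ⟨P, hPdeg, hP⟩ := exists_polynomial_zpow_mul_iteratedDerivWithin_zpow_neg_mul hs
    (hu.of_le hle) (hw.of_le hle) hu0 ht
  have hP0 : iteratedDerivWithin (n - k) w s t = P.eval 0 := by simpa using hP 0
  have hPl (p : ℕ) : (u ^ (p + l)) t * iteratedDerivWithin (n - k) (u ^ (-(p + l)) * w) s t =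
      P.eval (p + l : K) := by simpa using hP (p + l)
  convert sum_choose_mul_choose_mul_neg_one_pow_div_mul_eval
    (Finset.mem_range_succ_iff.1 hk) hPdeg hl using 2 with p _ p _
  · rw [← hPl]; ring
  · rw [← hP0]; ring

theorem stmt4 (J : Set ℝ) (hJconn : J.OrdConnected) (hJuniq : UniqueDiffOn ℝ J)
    (n : ℕ) (l : ℕ) (hl : 1 ≤ l) (u v w : ℝ → ℂ)
    (hu : ContDiffOn ℝ n u J) (hv : ContDiffOn ℝ n v J) (hw : ContDiffOn ℝ n w J)
    (hu0 : ∀ t ∈ J, u t ≠ 0) :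
    ∀ t ∈ J,
      (∑ p ∈ Finset.range (n + 1), (n.choose p : ℂ) * ((-1 : ℂ) ^ p / ((p : ℂ) + l)) *
        (u ^ (p + l)) t *
        iteratedDerivWithin p (v * iteratedDerivWithin (n - p) (u⁻¹ ^ (p + l) * w) J) J t) =
      ∑ p ∈ Finset.range (n + 1), (n.choose p : ℂ) * ((-1 : ℂ) ^ p / ((p : ℂ) + l)) *
        iteratedDerivWithin p (v * iteratedDerivWithin (n - p) w J) J t := by
  intro t ht
  have hl0 : ∀ p ≤ n, (p : ℂ) + (l : ℤ) ≠ 0 := fun p _ => by exact_mod_cast (by lia : p + l ≠ 0)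
  simpa only [← Nat.cast_add, zpow_neg, zpow_natCast, inv_pow, Int.cast_natCast] using
    stmt4_general hJuniq hl0 hu hv hw hu0 ht
end

section
/- (Lagrange product formula.) For every natural number n and every triple (ψ, f, g) of n-times continuously differentiable complex-valued functions on an interval J, (1/n!)·D^{n-1}(ψ^n · D(fg)) = Σ_{k=0}^{n} (1/k!)·D^{k-1}(ψ^k · Df) · (1/(n-k)!)·D^{n-k-1}(ψ^{n-k} · Dg), with the convention that for m = 0, D^{m-1}(ψ^m · Dh) denotes the function h itself. -/
open scoped Nat BigOperators

/-- `lag J ψ h m = D^{m-1}(ψ^m · Dh)` for `m ≥ 1`, with the convention that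
for `m = 0` it is the function `h` itself. Derivatives are taken within `J`. -/
noncomputable def lag (J : Set ℝ) (ψ h : ℝ → ℂ) : ℕ → ℝ → ℂ
  | 0 => h
  | (m + 1) => iteratedDerivWithin m (ψ ^ (m + 1) * derivWithin h J) J

/-!
For fixed `ψ`, put `A_n u = D^n(ψ^n u)` and `L_n h = D^{n-1}(ψ^n Dh)`, so that
`D L_n h = A_n (Dh)`, `L_{n+1} h = A_n (ψ Dh)` and `D A_n (ψ u) = A_{n+1} u`.
Write `∗` for binomial convolution of sequences, on which the shift acts as a derivation.
The core identity is the mixed product formula `A (f u) = L f ∗ A u`, by induction on the index: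
differentiating `A_n (f (ψ u)) = (L f ∗ A (ψ u))_n` gives
`A_{n+1} (f u) = (A (Df) ∗ A (ψ u))_n + (L f ∗ shift (A u))_n`, and a factor `ψ` can be moved from
one argument of `A v ∗ A u` to the other since `A (ψ v) = L ψ ∗ A v` at the indices already treated.
The first summand is therefore `(shift (L f) ∗ A u)_n`, and the two add up to `(L f ∗ A u)_{n+1}`.
The product formula for `L` follows from `L_{n+1} (f g) = A_n (g (ψ Df)) + A_n (f (ψ Dg))`.
-/

open Finset.HasAntidiagonal

section BinomialConvolution

variable {R : Type*}

/-- The binomial convolution `n ↦ ∑_{i + j = n} (n choose i) a_i b_j`, which is the product of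
exponential generating functions; it lets the product formulas be stated over rings in which
factorials need not be invertible. -/
def binomialConv [NonUnitalNonAssocSemiring R] (a b : ℕ → R) (n : ℕ) : R :=
  ∑ p ∈ antidiagonal n, n.choose p.1 • (a p.1 * b p.2)

section NonUnitalNonAssocSemiring

variable [NonUnitalNonAssocSemiring R]

lemma binomialConv_zero (a b : ℕ → R) : binomialConv a b 0 = a 0 * b 0 := by
  simp [binomialConv]

lemma binomialConv_congr {a a' b b' : ℕ → R} {n : ℕ} (ha : ∀ k ≤ n, a k = a' k)
    (hb : ∀ k ≤ n, b k = b' k) : binomialConv a b n = binomialConv a' b' n :=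
  Finset.sum_congr rfl fun p hp => by
    rw [ha _ (antidiagonal.fst_le hp), hb _ (antidiagonal.snd_le hp)]

lemma binomialConv_succ (a b : ℕ → R) (n : ℕ) :
    binomialConv a b (n + 1) =
      binomialConv (fun k => a (k + 1)) b n + binomialConv a (fun k => b (k + 1)) n := by
  rw [binomialConv, Finset.sum_antidiagonal_choose_succ_nsmul (fun i j => a i * b j), add_comm]
  congr 1
  exact Finset.sum_congr rfl fun p hp => by
    rw [Nat.choose_symm_of_eq_add (mem_antidiagonal.1 hp).symm]

lemma binomialConv_add_left (a a' b : ℕ → R) (n : ℕ) :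
    binomialConv (fun k => a k + a' k) b n = binomialConv a b n + binomialConv a' b n := by
  simp only [binomialConv, add_mul, nsmul_add, Finset.sum_add_distrib]

lemma binomialConv_add_right (a b b' : ℕ → R) (n : ℕ) :
    binomialConv a (fun k => b k + b' k) n = binomialConv a b n + binomialConv a b' n := by
  simp only [binomialConv, mul_add, nsmul_add, Finset.sum_add_distrib]

end NonUnitalNonAssocSemiring

lemma binomialConv_assoc [NonUnitalSemiring R] (a b c : ℕ → R) (n : ℕ) :
    binomialConv (binomialConv a b) c n = binomialConv a (binomialConv b c) n := by
  induction n generalizing a b c with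
  | zero => simp only [binomialConv_zero, mul_assoc]
  | succ n ih =>
    simp only [binomialConv_succ, binomialConv_add_left, binomialConv_add_right, ih, add_assoc]

lemma binomialConv_comm [NonUnitalNonAssocCommSemiring R] (a b : ℕ → R) (n : ℕ) :
    binomialConv a b n = binomialConv b a n := by
  induction n generalizing a b with
  | zero => simp only [binomialConv_zero, mul_comm]
  | succ n ih => rw [binomialConv_succ, binomialConv_succ b a, ih, ih a, add_comm]

lemma binomialConv_left_comm_of_le [NonUnitalCommSemiring R] {c a b ca cb : ℕ → R} {n : ℕ}
    (hca : ∀ m ≤ n, ca m = binomialConv c a m) (hcb : ∀ m ≤ n, cb m = binomialConv c b m) :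
    binomialConv a cb n = binomialConv ca b n :=
  calc binomialConv a cb n
      = binomialConv a (binomialConv c b) n := binomialConv_congr (fun _ _ => rfl) hcb
    _ = binomialConv (binomialConv a c) b n := (binomialConv_assoc a c b n).symm
    _ = binomialConv ca b n :=
        binomialConv_congr (fun m hm => by rw [hca m hm, binomialConv_comm]) fun _ _ => rfl

lemma one_div_factorial_mul_binomialConv {K : Type*} [Field K] [CharZero K] (a b : ℕ → K)
    (n : ℕ) :
    1 / (n ! : K) * binomialConv a b n =
      ∑ k ∈ Finset.range (n + 1), (1 / (k ! : K) * a k) * (1 / ((n - k)! : K) * b (n - k)) := by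
  rw [binomialConv, Finset.Nat.sum_antidiagonal_eq_sum_range_succ_mk, Finset.mul_sum]
  refine Finset.sum_congr rfl fun k hk => ?_
  have hn : (n ! : K) ≠ 0 := Nat.cast_ne_zero.2 n.factorial_ne_zero
  rw [nsmul_eq_mul, Nat.cast_choose K (Finset.mem_range_succ_iff.1 hk)]
  field_simp

end BinomialConvolution

section LagrangeProduct

variable {𝕜 𝔸 : Type*} [NontriviallyNormedField 𝕜] {s : Set 𝕜} {t : 𝕜} {n : ℕ}

lemma hasDerivWithinAt_iteratedDerivWithin {E : Type*} [NormedAddCommGroup E] [NormedSpace 𝕜 E]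
    {u : 𝕜 → E} (hs : UniqueDiffOn 𝕜 s) (hu : ContDiffOn 𝕜 (n + 1 : ℕ) u s) (ht : t ∈ s) :
    HasDerivWithinAt (iteratedDerivWithin n u s) (iteratedDerivWithin (n + 1) u s t) s t := by
  rw [iteratedDerivWithin_succ]
  exact (hu.differentiableOn_iteratedDerivWithin (mod_cast n.lt_succ_self) hs t
    ht).hasDerivWithinAt

lemma hasDerivWithinAt_binomialConv [NormedRing 𝔸] [NormedAlgebra 𝕜 𝔸] {a b : ℕ → 𝕜 → 𝔸}
    {a' b' : ℕ → 𝔸} (ha : ∀ k ≤ n, HasDerivWithinAt (a k) (a' k) s t)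
    (hb : ∀ k ≤ n, HasDerivWithinAt (b k) (b' k) s t) :
    HasDerivWithinAt (fun x => binomialConv (a · x) (b · x) n)
      (binomialConv a' (b · t) n + binomialConv (a · t) b' n) s t := by
  simp only [binomialConv, ← Finset.sum_add_distrib, ← nsmul_add]
  exact HasDerivWithinAt.fun_sum fun p hp =>
    ((ha _ (antidiagonal.fst_le hp)).fun_mul
      (hb _ (antidiagonal.snd_le hp))).fun_const_smul _

variable [NormedCommRing 𝔸] [NormedAlgebra 𝕜 𝔸] {ψ f g h u v : 𝕜 → 𝔸}

/-- The operator `D^n(ψ^n · u)` of the Lagrange inversion formula, with derivatives taken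
within `s`. -/
noncomputable def lagrangeDensity (s : Set 𝕜) (ψ u : 𝕜 → 𝔸) (n : ℕ) : 𝕜 → 𝔸 :=
  iteratedDerivWithin n (ψ ^ n * u) s

/-- The operator `D^{n-1}(ψ^n · Dh)` of the Lagrange inversion formula, with derivatives taken
within `s`. For `n = 0` it is `h` itself; for `n + 1` it is written as `D^n(ψ^n · (ψ · Dh))`. -/
noncomputable def lagrangeCoeff (s : Set 𝕜) (ψ h : 𝕜 → 𝔸) : ℕ → 𝕜 → 𝔸
  | 0 => h
  | n + 1 => lagrangeDensity s ψ (ψ * derivWithin h s) n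

lemma lag_eq_lagrangeCoeff (J : Set ℝ) (ψ h : ℝ → ℂ) (n : ℕ) :
    lag J ψ h n = lagrangeCoeff J ψ h n := by
  cases n with
  | zero => rfl
  | succ n => rw [lag, lagrangeCoeff, lagrangeDensity, pow_succ, mul_assoc]

lemma hasDerivWithinAt_lagrangeDensity (hs : UniqueDiffOn 𝕜 s)
    (hψ : ContDiffOn 𝕜 (n + 1 : ℕ) ψ s) (hu : ContDiffOn 𝕜 (n + 1 : ℕ) u s) (ht : t ∈ s) :
    HasDerivWithinAt (lagrangeDensity s ψ (ψ * u) n) (lagrangeDensity s ψ u (n + 1) t) s t := by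
  rw [lagrangeDensity, ← mul_assoc, ← pow_succ]
  exact hasDerivWithinAt_iteratedDerivWithin hs ((hψ.pow _).mul hu) ht

lemma hasDerivWithinAt_lagrangeCoeff (hs : UniqueDiffOn 𝕜 s)
    (hψ : ContDiffOn 𝕜 (n + 1 : ℕ) ψ s) (hh : ContDiffOn 𝕜 (n + 1 : ℕ) h s) (ht : t ∈ s) :
    HasDerivWithinAt (lagrangeCoeff s ψ h n) (lagrangeDensity s ψ (derivWithin h s) n t) s t := by
  cases n with
  | zero =>
    simpa [lagrangeCoeff, lagrangeDensity] using
      (hh.differentiableOn (by simp) t ht).hasDerivWithinAt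
  | succ n =>
    exact hasDerivWithinAt_lagrangeDensity hs (hψ.of_le (by norm_cast; lia))
      (hh.derivWithin hs (by norm_cast)) ht

lemma lagrangeDensity_congr (huv : Set.EqOn u v s) (ht : t ∈ s) :
    lagrangeDensity s ψ u n t = lagrangeDensity s ψ v n t :=
  iteratedDerivWithin_congr (fun x hx => congrArg ((ψ ^ n) x * ·) (huv hx)) ht

lemma lagrangeDensity_add (hs : UniqueDiffOn 𝕜 s) (hψ : ContDiffOn 𝕜 n ψ s)
    (hu : ContDiffOn 𝕜 n u s) (hv : ContDiffOn 𝕜 n v s) (ht : t ∈ s) :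
    lagrangeDensity s ψ (u + v) n t = lagrangeDensity s ψ u n t + lagrangeDensity s ψ v n t := by
  rw [lagrangeDensity, mul_add]
  exact iteratedDerivWithin_add ht hs (((hψ.pow n).mul hu) t ht) (((hψ.pow n).mul hv) t ht)

lemma lagrangeDensity_mul_succ_of_forall_mem (hs : UniqueDiffOn 𝕜 s)
    (hψ : ContDiffOn 𝕜 (n + 1 : ℕ) ψ s) (hf : ContDiffOn 𝕜 (n + 1 : ℕ) f s)
    (hu : ContDiffOn 𝕜 (n + 1 : ℕ) u s)
    (hmul : ∀ x ∈ s, lagrangeDensity s ψ (f * (ψ * u)) n x =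
      binomialConv (lagrangeCoeff s ψ f · x) (lagrangeDensity s ψ (ψ * u) · x) n) (ht : t ∈ s) :
    lagrangeDensity s ψ (f * u) (n + 1) t =
      binomialConv (lagrangeDensity s ψ (derivWithin f s) · t) (lagrangeDensity s ψ (ψ * u) · t) n +
        binomialConv (lagrangeCoeff s ψ f · t) (fun k => lagrangeDensity s ψ u (k + 1) t) n := by
  have of_le {k : ℕ} (hk : k ≤ n) {w : 𝕜 → 𝔸} (hw : ContDiffOn 𝕜 (n + 1 : ℕ) w s) :
      ContDiffOn 𝕜 (k + 1 : ℕ) w s := hw.of_le (mod_cast Nat.succ_le_succ hk)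
  have hderiv : HasDerivWithinAt (lagrangeDensity s ψ (f * (ψ * u)) n)
      (lagrangeDensity s ψ (f * u) (n + 1) t) s t := by
    rw [mul_left_comm]
    exact hasDerivWithinAt_lagrangeDensity hs hψ (hf.mul hu) ht
  have hderiv_conv := hasDerivWithinAt_binomialConv (n := n)
    (fun k hk => hasDerivWithinAt_lagrangeCoeff hs (of_le hk hψ) (of_le hk hf) ht)
    (fun k hk => hasDerivWithinAt_lagrangeDensity hs (of_le hk hψ) (of_le hk hu) ht)
  exact (hs t ht).eq_deriv _ hderiv (hderiv_conv.congr_of_mem hmul ht)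

theorem lagrangeDensity_mul (hs : UniqueDiffOn 𝕜 s) (hψ : ContDiffOn 𝕜 n ψ s)
    (hf : ContDiffOn 𝕜 n f s) (hu : ContDiffOn 𝕜 n u s) (ht : t ∈ s) :
    lagrangeDensity s ψ (f * u) n t =
      binomialConv (lagrangeCoeff s ψ f · t) (lagrangeDensity s ψ u · t) n := by
  induction n using Nat.strong_induction_on generalizing f u t with
  | _ n ih =>
  cases n with
  | zero => simp [lagrangeDensity, lagrangeCoeff, binomialConv_zero]
  | succ n =>
    have of_succ {w : 𝕜 → 𝔸} (hw : ContDiffOn 𝕜 (n + 1 : ℕ) w s) : ContDiffOn 𝕜 n w s :=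
      hw.of_le (mod_cast n.le_succ)
    have hmul : ∀ x ∈ s, lagrangeDensity s ψ (f * (ψ * u)) n x =
        binomialConv (lagrangeCoeff s ψ f · x) (lagrangeDensity s ψ (ψ * u) · x) n := fun x hx =>
      ih n n.lt_succ_self (of_succ hψ) (of_succ hf) ((of_succ hψ).mul (of_succ hu)) hx
    have ψ_mul {w : 𝕜 → 𝔸} (hw : ContDiffOn 𝕜 n w s) (m : ℕ) (hm : m ≤ n) :
        lagrangeDensity s ψ (ψ * w) m t =
          binomialConv (lagrangeCoeff s ψ ψ · t) (lagrangeDensity s ψ w · t) m :=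
      have hψm : ContDiffOn 𝕜 m ψ s := (of_succ hψ).of_le (mod_cast hm)
      ih m (Nat.lt_succ_of_le hm) hψm hψm (hw.of_le (mod_cast hm)) ht
    have exchange : binomialConv (lagrangeDensity s ψ (derivWithin f s) · t)
          (lagrangeDensity s ψ (ψ * u) · t) n =
        binomialConv (fun k => lagrangeCoeff s ψ f (k + 1) t) (lagrangeDensity s ψ u · t) n :=
      binomialConv_left_comm_of_le (ψ_mul (hf.derivWithin hs (by norm_cast))) (ψ_mul (of_succ hu))
    rw [lagrangeDensity_mul_succ_of_forall_mem hs hψ hf hu hmul ht, exchange,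
      binomialConv_succ]

theorem stmt9_general (hs : UniqueDiffOn 𝕜 s) (hψ : ContDiffOn 𝕜 n ψ s)
    (hf : ContDiffOn 𝕜 n f s) (hg : ContDiffOn 𝕜 n g s) (ht : t ∈ s) :
    lagrangeCoeff s ψ (f * g) n t =
      binomialConv (lagrangeCoeff s ψ f · t) (lagrangeCoeff s ψ g · t) n := by
  cases n with
  | zero => simp [lagrangeCoeff, binomialConv_zero]
  | succ n =>
    have of_succ {w : 𝕜 → 𝔸} (hw : ContDiffOn 𝕜 (n + 1 : ℕ) w s) : ContDiffOn 𝕜 n w s :=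
      hw.of_le (mod_cast n.le_succ)
    have contDiffOn_ψ_mul_deriv {w : 𝕜 → 𝔸} (hw : ContDiffOn 𝕜 (n + 1 : ℕ) w s) :
        ContDiffOn 𝕜 n (ψ * derivWithin w s) s :=
      (of_succ hψ).mul (hw.derivWithin hs (by norm_cast))
    have hgf : ContDiffOn 𝕜 n (g * (ψ * derivWithin f s)) s :=
      (of_succ hg).mul (contDiffOn_ψ_mul_deriv hf)
    have hfg : ContDiffOn 𝕜 n (f * (ψ * derivWithin g s)) s :=
      (of_succ hf).mul (contDiffOn_ψ_mul_deriv hg)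
    have leibniz : Set.EqOn (ψ * derivWithin (f * g) s)
        (g * (ψ * derivWithin f s) + f * (ψ * derivWithin g s)) s := by
      intro x hx
      simp only [Pi.mul_apply, Pi.add_apply]
      rw [derivWithin_mul (hf.differentiableOn (by simp) x hx)
        (hg.differentiableOn (by simp) x hx)]
      ring
    rw [lagrangeCoeff, lagrangeDensity_congr leibniz ht,
      lagrangeDensity_add hs (of_succ hψ) hgf hfg ht,
      lagrangeDensity_mul hs (of_succ hψ) (of_succ hg) (contDiffOn_ψ_mul_deriv hf) ht,
      lagrangeDensity_mul hs (of_succ hψ) (of_succ hf) (contDiffOn_ψ_mul_deriv hg) ht,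
      binomialConv_comm (lagrangeCoeff s ψ g · t), binomialConv_succ]
    rfl

end LagrangeProduct

theorem stmt9 (J : Set ℝ) (hJconn : J.OrdConnected) (hJuniq : UniqueDiffOn ℝ J)
    (n : ℕ) (ψ f g : ℝ → ℂ)
    (hψ : ContDiffOn ℝ n ψ J) (hf : ContDiffOn ℝ n f J) (hg : ContDiffOn ℝ n g J) :
    ∀ t ∈ J,
      (1 / (n ! : ℂ)) * lag J ψ (f * g) n t =
        ∑ k ∈ Finset.range (n + 1),
          ((1 / (k ! : ℂ)) * lag J ψ f k t) * ((1 / ((n - k)! : ℂ)) * lag J ψ g (n - k) t) := by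
  intro t ht
  simp only [lag_eq_lagrangeCoeff, stmt9_general hJuniq hψ hf hg ht,
    one_div_factorial_mul_binomialConv]
end

section
/- (Lagrange product formula, multifactor version.) For every natural number n, every integer p ≥ 2, and every system (ψ, f_1, …, f_p) of C^n complex-valued functions on an interval J, (1/n!)·D^{n-1}(ψ^n · D(f_1 ⋯ f_p)) = Σ_{α_1 + ⋯ + α_p = n} ∏_{j=1}^{p} (1/α_j!)·D^{α_j - 1}(ψ^{α_j} · D f_j), where the sum ranges over all p-tuples of natural numbers summing to n, with the convention that for α = 0 the factor D^{α-1}(ψ^α D f_j) denotes f_j. -/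
open scoped Nat BigOperators

/-!
If `Y` is the solution of `Y = t + z ψ(Y)` as a formal power series in `z`, Lagrange's expansion
reads `∑ D^{m-1}(ψ^m Dh)(t) z^m / m! = h(Y)` and `∑ D^m(ψ^m g)(t) z^m / m! = g(Y) ∂Y/∂t`. Write
`L_h` and `M_g` for these two series; the product formula says that `h ↦ L_h` is multiplicative.
No solution `Y` is needed: directly from the definitions, `∂_z L_h = M_{ψ h'}`, `∂_t L_h = M_{h'}`
and `∂_z M_g = ∂_t M_{ψ g}`. These give `M_{fg} = L_f M_g` by induction on the order in `z`, since,
using the lower orders for the products `f · (ψ g)`, `ψ · g` and `ψ · f'`,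
`∂_z M_{fg} = ∂_t (L_f M_{ψg}) = M_{f'} L_ψ M_g + L_f ∂_z M_g = ∂_z (L_f M_g)`.
Then `∂_z L_{fg} = M_{ψ(fg)'} = L_g M_{ψf'} + L_f M_{ψg'} = ∂_z (L_f L_g)`.
For functions of class `C^n` both product formulas hold modulo `z^{n+1}`.
-/

open scoped PowerSeries
open PowerSeries (coeff constantCoeff X)

section TruncatedSeries

variable {R : Type*} [CommRing R]

theorem smodEq_span_X_pow_iff {n : ℕ} {a b : R⟦X⟧} :
    a ≡ b [SMOD Ideal.span {(X : R⟦X⟧) ^ n}] ↔ ∀ m < n, coeff m a = coeff m b := by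
  simp only [SModEq.sub_mem, Ideal.mem_span_singleton, PowerSeries.X_pow_dvd_iff, map_sub,
    sub_eq_zero]

theorem smodEq_span_X_pow_succ_of_derivative [IsAddTorsionFree R] {n : ℕ} {a b : R⟦X⟧}
    (h₀ : constantCoeff a = constantCoeff b)
    (h : d⁄dX R a ≡ d⁄dX R b [SMOD Ideal.span {(X : R⟦X⟧) ^ n}]) :
    a ≡ b [SMOD Ideal.span {(X : R⟦X⟧) ^ (n + 1)}] := by
  rw [smodEq_span_X_pow_iff] at h ⊢
  rintro (_ | m) hm
  · simpa only [PowerSeries.coeff_zero_eq_constantCoeff] using h₀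
  · have hcoeff : (m + 1) • coeff (m + 1) a = (m + 1) • coeff (m + 1) b := by
      simpa only [PowerSeries.coeff_derivative, ← Nat.cast_succ, ← nsmul_eq_mul'] using
        h m (by lia)
    exact nsmul_right_injective m.succ_ne_zero hcoeff

end TruncatedSeries

section FormalSeries

variable {R : Type*} [CommSemiring R]

theorem coeff_prod_eq_sum_piAntidiag {ι : Type*} [DecidableEq ι] (a : ι → R⟦X⟧) (s : Finset ι)
    (n : ℕ) :
    coeff n (∏ j ∈ s, a j) = ∑ α ∈ s.piAntidiag n, ∏ j ∈ s, coeff (α j) (a j) := by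
  rw [PowerSeries.coeff_prod]
  refine Finset.sum_bij (fun l _ => l) (fun l hl => ?_) (fun l _ l' _ h => DFunLike.coe_injective h)
    (fun α hα => ?_) fun _ _ => rfl
  · simpa [Finset.subset_iff] using hl
  · rw [Finset.mem_piAntidiag] at hα
    exact ⟨Finsupp.onFinset s α hα.2,
      Finset.mem_finsuppAntidiag.2 ⟨hα.1, Finsupp.support_onFinset_subset⟩, rfl⟩

variable {𝕜 : Type*} [Field 𝕜] [Algebra 𝕜 R]

variable (𝕜) in
/-- The exponential generating series `∑ a_m z^m / m!` of a sequence, where `1 / m!` is taken in the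
field of scalars `𝕜`. -/
noncomputable def egf (a : ℕ → R) : R⟦X⟧ :=
  PowerSeries.mk fun m => (m ! : 𝕜)⁻¹ • a m

theorem coeff_egf (a : ℕ → R) (m : ℕ) : coeff m (egf 𝕜 a) = (m ! : 𝕜)⁻¹ • a m :=
  PowerSeries.coeff_mk _ _

theorem constantCoeff_egf (a : ℕ → R) : constantCoeff (egf 𝕜 a) = a 0 := by
  simp [← PowerSeries.coeff_zero_eq_constantCoeff_apply, coeff_egf]

theorem derivative_egf [CharZero 𝕜] (a : ℕ → R) :
    d⁄dX R (egf 𝕜 a) = egf 𝕜 fun m => a (m + 1) := by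
  ext m
  have hm : (m + 1 : 𝕜) ≠ 0 := m.cast_add_one_ne_zero
  have hfact : ((m + 1)! : 𝕜)⁻¹ * (m + 1) = (m ! : 𝕜)⁻¹ := by
    rw [Nat.factorial_succ, Nat.cast_mul, Nat.cast_succ, mul_inv_rev, inv_mul_cancel_right₀ hm]
  rw [PowerSeries.coeff_derivative, coeff_egf, coeff_egf, ← hfact, mul_smul, smul_mul_assoc,
    add_smul, one_smul, Nat.cast_smul_eq_nsmul, nsmul_eq_mul, mul_comm, add_mul, one_mul]

end FormalSeries

variable {𝕜 : Type*} [NontriviallyNormedField 𝕜] {𝔸 : Type*} [NormedCommRing 𝔸]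
  [NormedAlgebra 𝕜 𝔸] {J : Set 𝕜} {t : 𝕜} {n m : ℕ}

section CoeffDerivWithin

/-- The partial derivative `∂A/∂t` within `J` of a family of power series `A_t(z)`, taken
coefficient by coefficient. -/
noncomputable def coeffDerivWithin (J : Set 𝕜) (A : 𝕜 → 𝔸⟦X⟧) (t : 𝕜) : 𝔸⟦X⟧ :=
  PowerSeries.mk fun m => derivWithin (fun s => coeff m (A s)) J t

theorem coeffDerivWithin_egf (a : ℕ → 𝕜 → 𝔸) :
    coeffDerivWithin J (fun s => egf 𝕜 fun m => a m s) t =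
      egf 𝕜 fun m => derivWithin (a m) J t := by
  ext m
  simp only [coeffDerivWithin, PowerSeries.coeff_mk, coeff_egf, derivWithin_fun_const_smul_field]

theorem coeffDerivWithin_congr {A B : 𝕜 → 𝔸⟦X⟧}
    (h : ∀ s ∈ J, A s ≡ B s [SMOD Ideal.span {(X : 𝔸⟦X⟧) ^ n}]) (ht : t ∈ J) :
    coeffDerivWithin J A t ≡ coeffDerivWithin J B t [SMOD Ideal.span {(X : 𝔸⟦X⟧) ^ n}] := by
  simp only [smodEq_span_X_pow_iff, coeffDerivWithin, PowerSeries.coeff_mk] at h ⊢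
  exact fun m hm => derivWithin_congr (fun s hs => h s hs m hm) (h t ht m hm)

theorem coeffDerivWithin_mul {A B : 𝕜 → 𝔸⟦X⟧}
    (hA : ∀ m < n, DifferentiableWithinAt 𝕜 (fun s => coeff m (A s)) J t)
    (hB : ∀ m < n, DifferentiableWithinAt 𝕜 (fun s => coeff m (B s)) J t) :
    coeffDerivWithin J (fun s => A s * B s) t ≡
      coeffDerivWithin J A t * B t + A t * coeffDerivWithin J B t
        [SMOD Ideal.span {(X : 𝔸⟦X⟧) ^ n}] := by
  rw [smodEq_span_X_pow_iff]
  intro m hm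
  have hA' (x : ℕ × ℕ) (hx : x ∈ Finset.HasAntidiagonal.antidiagonal m) :=
    hA x.1 ((Finset.HasAntidiagonal.antidiagonal.fst_le hx).trans_lt hm)
  have hB' (x : ℕ × ℕ) (hx : x ∈ Finset.HasAntidiagonal.antidiagonal m) :=
    hB x.2 ((Finset.HasAntidiagonal.antidiagonal.snd_le hx).trans_lt hm)
  simp only [coeffDerivWithin, PowerSeries.coeff_mk, map_add, PowerSeries.coeff_mul]
  rw [derivWithin_fun_sum fun x hx => (hA' x hx).fun_mul (hB' x hx), ← Finset.sum_add_distrib]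
  exact Finset.sum_congr rfl fun x hx => derivWithin_fun_mul (hA' x hx) (hB' x hx)

end CoeffDerivWithin

section LagrangeTerms

/-- The term `D^{m-1}(ψ^m Dh)` of Lagrange's expansion of `h(Y)`, `Y = t + z ψ(Y)`, read as `h` for
`m = 0`; it extends `lag` to functions of a variable in any nontrivially normed field with values in
a commutative normed algebra. -/
noncomputable def lagrangeTerm (J : Set 𝕜) (ψ h : 𝕜 → 𝔸) : ℕ → 𝕜 → 𝔸
  | 0 => h
  | m + 1 => iteratedDerivWithin m (ψ ^ (m + 1) * derivWithin h J) J

/-- The term `D^m(ψ^m g)` of Lagrange's expansion of `g(Y) ∂Y/∂t`, `Y = t + z ψ(Y)`. -/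
noncomputable def lagrangeJacobianTerm (J : Set 𝕜) (ψ g : 𝕜 → 𝔸) (m : ℕ) : 𝕜 → 𝔸 :=
  iteratedDerivWithin m (ψ ^ m * g) J

theorem lag_eq_lagrangeTerm (J : Set ℝ) (ψ h : ℝ → ℂ) (m : ℕ) :
    lag J ψ h m = lagrangeTerm J ψ h m := by
  cases m <;> rfl

variable {ψ g h : 𝕜 → 𝔸}

theorem lagrangeTerm_succ :
    lagrangeTerm J ψ h (m + 1) = lagrangeJacobianTerm J ψ (ψ * derivWithin h J) m := by
  simp only [lagrangeTerm, lagrangeJacobianTerm, pow_succ, mul_assoc]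

theorem derivWithin_lagrangeTerm :
    derivWithin (lagrangeTerm J ψ h m) J = lagrangeJacobianTerm J ψ (derivWithin h J) m := by
  cases m with
  | zero => simp only [lagrangeTerm, lagrangeJacobianTerm, pow_zero, one_mul,
      iteratedDerivWithin_zero]
  | succ m => simp only [lagrangeTerm, lagrangeJacobianTerm, iteratedDerivWithin_succ]

theorem derivWithin_lagrangeJacobianTerm_mul :
    derivWithin (lagrangeJacobianTerm J ψ (ψ * g) m) J = lagrangeJacobianTerm J ψ g (m + 1) := by
  simp only [lagrangeJacobianTerm, iteratedDerivWithin_succ, pow_succ, mul_assoc]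

theorem differentiableOn_lagrangeJacobianTerm (hJ : UniqueDiffOn 𝕜 J) (hψ : ContDiffOn 𝕜 n ψ J)
    (hg : ContDiffOn 𝕜 n g J) (hm : m < n) :
    DifferentiableOn 𝕜 (lagrangeJacobianTerm J ψ g m) J :=
  ((hψ.pow m).mul hg).differentiableOn_iteratedDerivWithin (mod_cast hm) hJ

theorem differentiableOn_lagrangeTerm (hJ : UniqueDiffOn 𝕜 J) (hψ : ContDiffOn 𝕜 n ψ J)
    (hh : ContDiffOn 𝕜 n h J) (hm : m < n) :
    DifferentiableOn 𝕜 (lagrangeTerm J ψ h m) J := by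
  cases m with
  | zero => exact hh.differentiableOn (mod_cast hm.ne')
  | succ m =>
    have hle : ((m + 1 : ℕ) : WithTop ℕ∞) ≤ n := mod_cast hm.le
    have hh' : ContDiffOn 𝕜 (m + 1 : ℕ) (derivWithin h J) J := hh.derivWithin hJ (mod_cast hm)
    rw [lagrangeTerm_succ]
    exact differentiableOn_lagrangeJacobianTerm hJ (hψ.of_le hle) ((hψ.of_le hle).mul hh')
      m.lt_succ_self

end LagrangeTerms

section LagrangeSeries

/-- The series `∑ D^{m-1}(ψ^m Dh)(t) z^m / m!`, Lagrange's expansion of `h(Y)`. -/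
noncomputable def lagrangeSeries (J : Set 𝕜) (ψ h : 𝕜 → 𝔸) (t : 𝕜) : 𝔸⟦X⟧ :=
  egf 𝕜 fun m => lagrangeTerm J ψ h m t

/-- The series `∑ D^m(ψ^m g)(t) z^m / m!`, Lagrange's expansion of `g(Y) ∂Y/∂t`. -/
noncomputable def lagrangeJacobianSeries (J : Set 𝕜) (ψ g : 𝕜 → 𝔸) (t : 𝕜) : 𝔸⟦X⟧ :=
  egf 𝕜 fun m => lagrangeJacobianTerm J ψ g m t

variable {ψ f g h : 𝕜 → 𝔸}

@[simp]
theorem constantCoeff_lagrangeSeries : constantCoeff (lagrangeSeries J ψ h t) = h t :=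
  constantCoeff_egf _

@[simp]
theorem constantCoeff_lagrangeJacobianSeries :
    constantCoeff (lagrangeJacobianSeries J ψ g t) = g t := by
  simp only [lagrangeJacobianSeries, constantCoeff_egf, lagrangeJacobianTerm, pow_zero, one_mul,
    iteratedDerivWithin_zero]

theorem lagrangeSeries_one : lagrangeSeries J ψ 1 t = 1 := by
  ext m
  cases m with
  | zero => simp
  | succ m =>
    have hone : derivWithin (1 : 𝕜 → 𝔸) J = 0 := derivWithin_one J
    simp [lagrangeSeries, coeff_egf, lagrangeTerm, hone, PowerSeries.coeff_one]

theorem coeffDerivWithin_lagrangeSeries :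
    coeffDerivWithin J (lagrangeSeries J ψ h) t =
      lagrangeJacobianSeries J ψ (derivWithin h J) t := by
  simp only [lagrangeJacobianSeries, ← derivWithin_lagrangeTerm]
  exact coeffDerivWithin_egf _

theorem differentiableWithinAt_coeff_lagrangeSeries (hJ : UniqueDiffOn 𝕜 J)
    (hψ : ContDiffOn 𝕜 n ψ J) (hh : ContDiffOn 𝕜 n h J) (ht : t ∈ J) (hm : m < n) :
    DifferentiableWithinAt 𝕜 (fun s => coeff m (lagrangeSeries J ψ h s)) J t := by
  simp only [lagrangeSeries, coeff_egf]
  exact (differentiableOn_lagrangeTerm hJ hψ hh hm t ht).fun_const_smul _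

theorem differentiableWithinAt_coeff_lagrangeJacobianSeries (hJ : UniqueDiffOn 𝕜 J)
    (hψ : ContDiffOn 𝕜 n ψ J) (hg : ContDiffOn 𝕜 n g J) (ht : t ∈ J) (hm : m < n) :
    DifferentiableWithinAt 𝕜 (fun s => coeff m (lagrangeJacobianSeries J ψ g s)) J t := by
  simp only [lagrangeJacobianSeries, coeff_egf]
  exact (differentiableOn_lagrangeJacobianTerm hJ hψ hg hm t ht).fun_const_smul _

theorem lagrangeJacobianSeries_congr (h : Set.EqOn f g J) (ht : t ∈ J) :
    lagrangeJacobianSeries J ψ f t = lagrangeJacobianSeries J ψ g t := by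
  have hterm (m : ℕ) : lagrangeJacobianTerm J ψ f m t = lagrangeJacobianTerm J ψ g m t :=
    iteratedDerivWithin_congr (fun s hs => congrArg ((ψ ^ m) s * ·) (h hs)) ht
  simp only [lagrangeJacobianSeries, hterm]

theorem lagrangeJacobianSeries_add (hJ : UniqueDiffOn 𝕜 J) (hψ : ContDiffOn 𝕜 n ψ J)
    (hf : ContDiffOn 𝕜 n f J) (hg : ContDiffOn 𝕜 n g J) (ht : t ∈ J) :
    lagrangeJacobianSeries J ψ (f + g) t ≡
      lagrangeJacobianSeries J ψ f t + lagrangeJacobianSeries J ψ g t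
        [SMOD Ideal.span {(X : 𝔸⟦X⟧) ^ (n + 1)}] := by
  rw [smodEq_span_X_pow_iff]
  intro m hm
  have hle : (m : WithTop ℕ∞) ≤ n := mod_cast Nat.le_of_lt_succ hm
  have hcont {u : 𝕜 → 𝔸} (hu : ContDiffOn 𝕜 n u J) : ContDiffOn 𝕜 m (ψ ^ m * u) J :=
    ((hψ.pow m).mul hu).of_le hle
  simp only [lagrangeJacobianSeries, map_add, coeff_egf, ← smul_add, lagrangeJacobianTerm, mul_add]
  rw [iteratedDerivWithin_add ht hJ (hcont hf t ht) (hcont hg t ht)]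

variable [CharZero 𝕜]

theorem derivative_lagrangeSeries :
    d⁄dX 𝔸 (lagrangeSeries J ψ h t) = lagrangeJacobianSeries J ψ (ψ * derivWithin h J) t := by
  simp only [lagrangeSeries, lagrangeJacobianSeries, derivative_egf, lagrangeTerm_succ]

theorem derivative_lagrangeJacobianSeries :
    d⁄dX 𝔸 (lagrangeJacobianSeries J ψ g t) =
      coeffDerivWithin J (lagrangeJacobianSeries J ψ (ψ * g)) t := by
  simp only [lagrangeJacobianSeries, derivative_egf, ← derivWithin_lagrangeJacobianTerm_mul]
  exact (coeffDerivWithin_egf _).symm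

theorem derivative_lagrangeJacobianSeries_mul (hJ : UniqueDiffOn 𝕜 J) (hψ : ContDiffOn 𝕜 n ψ J)
    (hf : ContDiffOn 𝕜 n f J) (hg : ContDiffOn 𝕜 n g J) (ht : t ∈ J)
    (h : ∀ s ∈ J, lagrangeJacobianSeries J ψ (f * (ψ * g)) s ≡
      lagrangeSeries J ψ f s * lagrangeJacobianSeries J ψ (ψ * g) s
        [SMOD Ideal.span {(X : 𝔸⟦X⟧) ^ n}]) :
    d⁄dX 𝔸 (lagrangeJacobianSeries J ψ (f * g) t) ≡
      lagrangeJacobianSeries J ψ (derivWithin f J) t * lagrangeJacobianSeries J ψ (ψ * g) t +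
        lagrangeSeries J ψ f t * d⁄dX 𝔸 (lagrangeJacobianSeries J ψ g t)
        [SMOD Ideal.span {(X : 𝔸⟦X⟧) ^ n}] := by
  rw [derivative_lagrangeJacobianSeries, derivative_lagrangeJacobianSeries, mul_left_comm,
    ← coeffDerivWithin_lagrangeSeries]
  exact (coeffDerivWithin_congr h ht).trans <| coeffDerivWithin_mul
    (fun m hm => differentiableWithinAt_coeff_lagrangeSeries hJ hψ hf ht hm)
    fun m hm => differentiableWithinAt_coeff_lagrangeJacobianSeries hJ hψ (hψ.mul hg) ht hm

theorem lagrangeJacobianSeries_mul (hJ : UniqueDiffOn 𝕜 J) (hψ : ContDiffOn 𝕜 n ψ J)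
    (hf : ContDiffOn 𝕜 n f J) (hg : ContDiffOn 𝕜 n g J) (ht : t ∈ J) :
    lagrangeJacobianSeries J ψ (f * g) t ≡
      lagrangeSeries J ψ f t * lagrangeJacobianSeries J ψ g t
        [SMOD Ideal.span {(X : 𝔸⟦X⟧) ^ (n + 1)}] := by
  have : IsAddTorsionFree 𝔸 := .of_isTorsionFree 𝕜 𝔸
  induction n generalizing f g t with
  | zero => exact smodEq_span_X_pow_succ_of_derivative (by simp) (by simp)
  | succ n ih =>
    have hle : (n : WithTop ℕ∞) ≤ (n + 1 : ℕ) := mod_cast n.le_succ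
    have hψn := hψ.of_le hle
    have hf' : ContDiffOn 𝕜 n (derivWithin f J) J := hf.derivWithin hJ le_rfl
    have exchange :
        lagrangeJacobianSeries J ψ (derivWithin f J) t * lagrangeJacobianSeries J ψ (ψ * g) t ≡
          lagrangeJacobianSeries J ψ (ψ * derivWithin f J) t * lagrangeJacobianSeries J ψ g t
            [SMOD Ideal.span {(X : 𝔸⟦X⟧) ^ (n + 1)}] := by
      refine (SModEq.rfl.mul (ih hψn hψn (hg.of_le hle) ht)).trans ?_
      rw [← mul_assoc, mul_comm (lagrangeJacobianSeries _ _ (derivWithin f J) t)]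
      exact (ih hψn hψn hf' ht).symm.mul SModEq.rfl
    refine smodEq_span_X_pow_succ_of_derivative (by simp) ?_
    calc d⁄dX 𝔸 (lagrangeJacobianSeries J ψ (f * g) t)
      _ ≡ lagrangeJacobianSeries J ψ (derivWithin f J) t * lagrangeJacobianSeries J ψ (ψ * g) t +
            lagrangeSeries J ψ f t * d⁄dX 𝔸 (lagrangeJacobianSeries J ψ g t)
            [SMOD Ideal.span {(X : 𝔸⟦X⟧) ^ (n + 1)}] :=
        derivative_lagrangeJacobianSeries_mul hJ hψ hf hg ht fun s hs =>
          ih hψn (hf.of_le hle) ((hψ.mul hg).of_le hle) hs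
      _ ≡ lagrangeJacobianSeries J ψ (ψ * derivWithin f J) t * lagrangeJacobianSeries J ψ g t +
            lagrangeSeries J ψ f t * d⁄dX 𝔸 (lagrangeJacobianSeries J ψ g t)
            [SMOD Ideal.span {(X : 𝔸⟦X⟧) ^ (n + 1)}] := exchange.add SModEq.rfl
      _ = d⁄dX 𝔸 (lagrangeSeries J ψ f t * lagrangeJacobianSeries J ψ g t) := by
        rw [Derivation.leibniz, derivative_lagrangeSeries, smul_eq_mul, smul_eq_mul, add_comm,
          mul_comm (lagrangeJacobianSeries J ψ g t)]

theorem derivative_lagrangeSeries_mul (hJ : UniqueDiffOn 𝕜 J) (hψ : ContDiffOn 𝕜 n ψ J)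
    (hf : ContDiffOn 𝕜 (n + 1 : ℕ) f J) (hg : ContDiffOn 𝕜 (n + 1 : ℕ) g J) (ht : t ∈ J) :
    d⁄dX 𝔸 (lagrangeSeries J ψ (f * g) t) ≡
      lagrangeJacobianSeries J ψ (f * (ψ * derivWithin g J)) t +
        lagrangeJacobianSeries J ψ (g * (ψ * derivWithin f J)) t
        [SMOD Ideal.span {(X : 𝔸⟦X⟧) ^ (n + 1)}] := by
  have leibniz : Set.EqOn (ψ * derivWithin (f * g) J)
      (f * (ψ * derivWithin g J) + g * (ψ * derivWithin f J)) J := by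
    intro s hs
    have hne : ((n + 1 : ℕ) : WithTop ℕ∞) ≠ 0 := mod_cast n.succ_ne_zero
    simp only [Pi.mul_apply, Pi.add_apply,
      derivWithin_mul (hf.differentiableOn hne s hs) (hg.differentiableOn hne s hs)]
    ring
  have hle : (n : WithTop ℕ∞) ≤ (n + 1 : ℕ) := mod_cast n.le_succ
  rw [derivative_lagrangeSeries, lagrangeJacobianSeries_congr leibniz ht]
  exact lagrangeJacobianSeries_add hJ hψ
    ((hf.of_le hle).mul (hψ.mul (hg.derivWithin hJ le_rfl)))
    ((hg.of_le hle).mul (hψ.mul (hf.derivWithin hJ le_rfl))) ht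

theorem lagrangeSeries_mul (hJ : UniqueDiffOn 𝕜 J) (hψ : ContDiffOn 𝕜 n ψ J)
    (hf : ContDiffOn 𝕜 n f J) (hg : ContDiffOn 𝕜 n g J) (ht : t ∈ J) :
    lagrangeSeries J ψ (f * g) t ≡ lagrangeSeries J ψ f t * lagrangeSeries J ψ g t
      [SMOD Ideal.span {(X : 𝔸⟦X⟧) ^ (n + 1)}] := by
  have : IsAddTorsionFree 𝔸 := .of_isTorsionFree 𝕜 𝔸
  refine smodEq_span_X_pow_succ_of_derivative (by simp) ?_
  cases n with
  | zero => simp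
  | succ n =>
    have hle : (n : WithTop ℕ∞) ≤ (n + 1 : ℕ) := mod_cast n.le_succ
    have hψn := hψ.of_le hle
    calc d⁄dX 𝔸 (lagrangeSeries J ψ (f * g) t)
      _ ≡ lagrangeJacobianSeries J ψ (f * (ψ * derivWithin g J)) t +
            lagrangeJacobianSeries J ψ (g * (ψ * derivWithin f J)) t
            [SMOD Ideal.span {(X : 𝔸⟦X⟧) ^ (n + 1)}] :=
        derivative_lagrangeSeries_mul hJ hψn hf hg ht
      _ ≡ lagrangeSeries J ψ f t * lagrangeJacobianSeries J ψ (ψ * derivWithin g J) t +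
            lagrangeSeries J ψ g t * lagrangeJacobianSeries J ψ (ψ * derivWithin f J) t
            [SMOD Ideal.span {(X : 𝔸⟦X⟧) ^ (n + 1)}] :=
        (lagrangeJacobianSeries_mul hJ hψn (hf.of_le hle)
          (hψn.mul (hg.derivWithin hJ le_rfl)) ht).add
          (lagrangeJacobianSeries_mul hJ hψn (hg.of_le hle)
            (hψn.mul (hf.derivWithin hJ le_rfl)) ht)
      _ = d⁄dX 𝔸 (lagrangeSeries J ψ f t * lagrangeSeries J ψ g t) := by
        simp only [Derivation.leibniz, derivative_lagrangeSeries, smul_eq_mul]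

theorem lagrangeSeries_prod {ι : Type*} {f : ι → 𝕜 → 𝔸} {s : Finset ι} (hJ : UniqueDiffOn 𝕜 J)
    (hψ : ContDiffOn 𝕜 n ψ J) (hf : ∀ j ∈ s, ContDiffOn 𝕜 n (f j) J) (ht : t ∈ J) :
    lagrangeSeries J ψ (∏ j ∈ s, f j) t ≡ ∏ j ∈ s, lagrangeSeries J ψ (f j) t
      [SMOD Ideal.span {(X : 𝔸⟦X⟧) ^ (n + 1)}] := by
  classical
  induction s using Finset.induction_on with
  | empty => simp only [Finset.prod_empty, lagrangeSeries_one, SModEq.rfl]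
  | insert j s hj ih =>
    rw [Finset.forall_mem_insert] at hf
    rw [Finset.prod_insert hj, Finset.prod_insert hj]
    exact (lagrangeSeries_mul hJ hψ hf.1 (contDiffOn_prod' hf.2) ht).trans
      (SModEq.rfl.mul (ih hf.2))

end LagrangeSeries

theorem stmt10_general [CharZero 𝕜] {ι : Type*} [DecidableEq ι] {ψ : 𝕜 → 𝔸} {f : ι → 𝕜 → 𝔸}
    {s : Finset ι} (hJ : UniqueDiffOn 𝕜 J) (hψ : ContDiffOn 𝕜 n ψ J)
    (hf : ∀ j ∈ s, ContDiffOn 𝕜 n (f j) J) (ht : t ∈ J) :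
    (n ! : 𝕜)⁻¹ • lagrangeTerm J ψ (∏ j ∈ s, f j) n t =
      ∑ α ∈ s.piAntidiag n, ∏ j ∈ s, ((α j)! : 𝕜)⁻¹ • lagrangeTerm J ψ (f j) (α j) t := by
  have hcoeff := smodEq_span_X_pow_iff.1 (lagrangeSeries_prod hJ hψ hf ht) n n.lt_succ_self
  simpa only [coeff_prod_eq_sum_piAntidiag, lagrangeSeries, coeff_egf] using hcoeff

theorem stmt10 (J : Set ℝ) (hJconn : J.OrdConnected) (hJuniq : UniqueDiffOn ℝ J)
    (n p : ℕ) (hp : 2 ≤ p) (ψ : ℝ → ℂ) (f : Fin p → ℝ → ℂ)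
    (hψ : ContDiffOn ℝ n ψ J) (hf : ∀ j, ContDiffOn ℝ n (f j) J) :
    ∀ t ∈ J,
      (1 / (n ! : ℂ)) * lag J ψ (∏ j, f j) n t =
        ∑ α ∈ Finset.Nat.antidiagonalTuple p n,
          ∏ j, (1 / ((α j)! : ℂ)) * lag J ψ (f j) (α j) t := by
  intro t ht
  simpa [lag_eq_lagrangeTerm, Finset.piAntidiag_univ_fin_eq_antidiagonalTuple] using
    stmt10_general (s := Finset.univ) hJuniq hψ (fun j _ => hf j) ht
end
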